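/- Let A ∈ ℂ^{n×n} be sectorial. Then prank(A) ≥ min{ rank(A − M) : M ∈ ℂ^{n×n} Hermitian positive definite }, and moreover min{ rank(A − M) : M Hermitian positive definite } = min{ rank(TᴴAT − I) : T ∈ ℂ^{n×n} invertible }. -/

import Mathlib

noncomputable section

open Matrix
open scoped Classical ComplexOrder

namespace LowPrank

variable {n : ℕ}

/-- A matrix is sectorial if its numerical range does not contain `0`
(`star x ⬝ᵥ x = 1` encodes `‖x‖₂ = 1`). -/
def IsSectorial (A : Matrix (Fin n) (Fin n) ℂ) : Prop :=
  ∀ x : Fin n → ℂ, star x ⬝ᵥ x = 1 → star x ⬝ᵥ A.mulVec x ≠ 0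

/-- The diagonal unitary matrix `diag (e^{iφ₁}, …, e^{iφₙ})`. -/
def phaseDiag (φ : Fin n → ℝ) : Matrix (Fin n) (Fin n) ℂ :=
  Matrix.diagonal fun k => Complex.exp (Complex.I * (φ k : ℂ))

/-- `A = Tᴴ diag (e^{iφ₁}, …, e^{iφₙ}) T` with `T` invertible. -/
def IsSectorialDecomp (A T : Matrix (Fin n) (Fin n) ℂ) (φ : Fin n → ℝ) : Prop :=
  IsUnit T ∧ A = Tᴴ * phaseDiag φ * T

/-- `φ` is the (sorted, normalized) vector of canonical phases of `A`:
nonincreasing, spread `< π`, midpoint of the range in `(-π, π]`, and realizing a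
sectorial decomposition of `A`. -/
def IsCanonicalPhases (A : Matrix (Fin n) (Fin n) ℂ) (φ : Fin n → ℝ) : Prop :=
  Antitone φ ∧ (∀ i j, φ i - φ j < Real.pi) ∧
    (-Real.pi < ((⨆ i, φ i) + ⨅ i, φ i) / 2) ∧ (((⨆ i, φ i) + ⨅ i, φ i) / 2 ≤ Real.pi) ∧
    ∃ T, IsSectorialDecomp A T φ

/-- The canonical phases `φ₁(A) ≥ ⋯ ≥ φₙ(A)` of a sectorial matrix
(`phases A k` is the `(k+1)`-st largest canonical phase). -/
noncomputable def phases (A : Matrix (Fin n) (Fin n) ℂ) : Fin n → ℝ :=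
  if h : ∃ φ, IsCanonicalPhases A φ then h.choose else 0

/-- The phase-rank: the number of nonzero canonical phases. -/
noncomputable def prank (A : Matrix (Fin n) (Fin n) ℂ) : ℕ :=
  {k : Fin n | phases A k ≠ 0}.ncard

/-- Positive-imaginary: sectorial with all canonical phases in `[0, π)`. -/
def PositiveImaginary (A : Matrix (Fin n) (Fin n) ℂ) : Prop :=
  IsSectorial A ∧ ∀ k, phases A k ∈ Set.Ico 0 Real.pi

/-- Symmetric gauge function. -/
structure IsSymmetricGauge (Φ : (Fin n → ℝ) → ℝ) : Prop where
  pos : ∀ x, x ≠ 0 → 0 < Φ x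
  smul : ∀ (ρ : ℝ) (x), Φ (ρ • x) = |ρ| * Φ x
  subadd : ∀ x y, Φ (x + y) ≤ Φ x + Φ y
  perm : ∀ (σ : Equiv.Perm (Fin n)) (x), Φ (x ∘ σ) = Φ x
  abs : ∀ x, Φ (fun k => |x k|) = Φ x

/-- The set `S_p(A, r)` of `r`-half-truncations of `A`. -/
def Sp (A : Matrix (Fin n) (Fin n) ℂ) (r : ℕ) : Set (Matrix (Fin n) (Fin n) ℂ) :=
  {E | ∃ T, IsSectorialDecomp A T (phases A) ∧
    E = Tᴴ * Matrix.diagonal (fun k : Fin n =>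
      if (k : ℕ) < r then Complex.exp (Complex.I * ((phases A k / 2 : ℝ) : ℂ)) else 1) * T}

/-! By the Toeplitz–Hausdorff theorem the numerical range of a sectorial matrix `A` is a compact
convex set, so a line separates it from `0`, that is, `c • A` has positive definite Hermitian part
for some `c ≠ 0`. Diagonalizing the Hermitian and skew-Hermitian parts of `c • A` simultaneously
gives a sectorial decomposition `A = Tᴴ D T`, whence canonical phases exist. Then `Tᴴ T` is positive
definite and `A - Tᴴ T = Tᴴ (D - 1) T` has rank at most `prank A`. The two minima agree because any
positive definite `M` is `Sᴴ S`, and congruence by `S⁻¹` takes `A - Sᴴ S` to `(S⁻¹)ᴴ A S⁻¹ - 1`. -/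

section NumericalRange

open scoped ComplexConjugate InnerProductSpace

lemma exists_norm_eq_one_im_mul_add_conj_mul_eq_zero (p q : ℂ) :
    ∃ u : ℂ, ‖u‖ = 1 ∧ (u * p + conj u * q).im = 0 := by
  obtain ⟨u, hu, h⟩ := RCLike.exists_norm_eq_mul_self (p - conj q)
  refine ⟨u, hu, ?_⟩
  have him := congrArg Complex.im h
  simp only [Complex.coe_algebraMap, Complex.ofReal_im, Complex.mul_im, Complex.sub_im,
    Complex.conj_im, Complex.sub_re, Complex.conj_re, Complex.add_im] at him ⊢
  linarith

/-- After a rotation of `y` making the cross terms real, `B` is a real quadratic polynomial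
of positive leading and negative constant coefficient along the line `s ↦ s • x + y`. -/
lemma exists_ne_zero_apply_self_eq_zero {V : Type*} [AddCommGroup V] [Module ℂ V]
    (B : V →ₗ⋆[ℂ] V →ₗ[ℂ] ℂ) {x y : V} (hx : 0 < B x x) (hy : B y y < 0) :
    ∃ w, w ≠ 0 ∧ B w w = 0 := by
  obtain ⟨α, hα, hxα⟩ := RCLike.pos_iff_exists_ofReal.1 hx
  obtain ⟨β, hβ, hyβ⟩ := RCLike.neg_iff_exists_ofReal.1 hy
  obtain ⟨u, hu, him⟩ := exists_norm_eq_one_im_mul_add_conj_mul_eq_zero (B x y) (B y x)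
  set κ : ℝ := (u * B x y + conj u * B y x).re
  have hcross : u * B x y + conj u * B y x = κ := Complex.ext rfl him
  have huu : conj u * u = 1 := by simp [Complex.conj_mul', hu]
  have hline (s : ℝ) : B ((s : ℂ) • x + u • y) ((s : ℂ) • x + u • y) =
      (α * (s * s) + κ * s + β : ℝ) := by
    simp only [map_add, map_smulₛₗ, LinearMap.add_apply, LinearMap.smul_apply, smul_eq_mul,
      Complex.conj_ofReal, RingHom.id_apply, ← hxα, ← hyβ]
    push_cast
    linear_combination (s : ℂ) * hcross + (β : ℂ) * huu
  obtain ⟨s, hs⟩ : ∃ s, α * (s * s) + κ * s + β = 0 :=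
    exists_quadratic_eq_zero hα.ne' ⟨√(discrim α κ β), by
      rw [Real.mul_self_sqrt]
      rw [discrim]
      nlinarith [sq_nonneg κ]⟩
  refine ⟨(s : ℂ) • x + u • y, fun h0 ↦ ?_, by rw [hline, hs, Complex.ofReal_zero]⟩
  have hyx : u • y = (-s : ℂ) • x := by rw [neg_smul]; exact eq_neg_of_add_eq_zero_right h0
  have hβα : β = s * s * α := by
    have := congrArg (fun v ↦ B v v) hyx
    simp only [map_smulₛₗ, LinearMap.smul_apply, smul_eq_mul, ← hxα, ← hyβ, map_neg,
      Complex.conj_ofReal, RingHom.id_apply] at this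
    refine Complex.ofReal_injective ?_
    push_cast
    linear_combination this - (β : ℂ) * huu
  nlinarith [mul_nonneg (mul_self_nonneg s) hα.le]

variable {E : Type*} [NormedAddCommGroup E] [InnerProductSpace ℂ E]

/-- The numerical range `W(T)` of an operator on a complex inner product space. -/
def numericalRange (T : E →ₗ[ℂ] E) : Set ℂ :=
  (fun x ↦ ⟪x, T x⟫_ℂ) '' Metric.sphere 0 1

lemma inner_div_norm_sq_mem_numericalRange (T : E →ₗ[ℂ] E) {x : E} (hx : x ≠ 0) :
    ⟪x, T x⟫_ℂ / (‖x‖ : ℂ) ^ 2 ∈ numericalRange T := by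
  refine ⟨(‖x‖⁻¹ : ℂ) • x, by simp [norm_smul, hx], ?_⟩
  simp only [map_smul, inner_smul_left, inner_smul_right, map_inv₀, Complex.conj_ofReal]
  ring

/-- The **Toeplitz–Hausdorff theorem**. -/
theorem convex_numericalRange (T : E →ₗ[ℂ] E) : Convex ℝ (numericalRange T) := by
  rw [convex_iff_pairwise_pos]
  rintro _ ⟨x, hx, rfl⟩ _ ⟨y, hy, rfl⟩ hne a b ha hb hab
  rw [mem_sphere_zero_iff_norm] at hx hy
  set z₁ := ⟪x, T x⟫_ℂ
  set z₂ := ⟪y, T y⟫_ℂ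
  set p : ℂ := a • z₁ + b • z₂ with hp
  set d := z₁ - z₂
  have hab' : (a : ℂ) + b = 1 := by exact_mod_cast hab
  have hd : 0 < conj d * d := by
    rw [Complex.conj_mul']
    exact_mod_cast pow_pos (norm_pos_iff.2 (sub_ne_zero.2 hne)) 2
  -- Rotated by `conj d`, the values of `T - p` at `x` and `y` lie on either side of `0` in `ℝ`.
  let B : E →ₗ⋆[ℂ] E →ₗ[ℂ] ℂ := (innerₛₗ ℂ).compl₂ (conj d • (T - p • LinearMap.id))
  have hB (v : E) : B v v = conj d * (⟪v, T v⟫_ℂ - p * (‖v‖ : ℂ) ^ 2) := by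
    simp [B, inner_sub_right, inner_smul_right]
  have hBx : B x x = b * (conj d * d) := by
    rw [hB, hx, hp]
    simp only [Complex.real_smul]
    push_cast
    linear_combination (-conj d * z₁) * hab'
  have hBy : B y y = -(a * (conj d * d)) := by
    rw [hB, hy, hp]
    simp only [Complex.real_smul]
    push_cast
    linear_combination (-conj d * z₂) * hab'
  obtain ⟨w, hw, hBw⟩ := exists_ne_zero_apply_self_eq_zero B
    (hBx ▸ mul_pos (by exact_mod_cast hb) hd)
    (hBy ▸ neg_neg_of_pos (mul_pos (by exact_mod_cast ha) hd))
  rw [hB, mul_eq_zero_iff_left (left_ne_zero_of_mul hd.ne'), sub_eq_zero] at hBw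
  have hwp : ⟪w, T w⟫_ℂ / (‖w‖ : ℂ) ^ 2 = p := by
    rw [hBw, mul_div_cancel_right₀ _ (by simpa using hw)]
  exact hwp ▸ inner_div_norm_sq_mem_numericalRange T hw

lemma isCompact_numericalRange [FiniteDimensional ℂ E] (T : E →ₗ[ℂ] E) :
    IsCompact (numericalRange T) := by
  have := FiniteDimensional.proper ℂ E
  have hT : Continuous T := T.continuous_of_finiteDimensional
  exact (isCompact_sphere 0 1).image (by fun_prop)

lemma exists_forall_re_mul_inner_pos [FiniteDimensional ℂ E] {T : E →ₗ[ℂ] E}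
    (hT : 0 ∉ numericalRange T) :
    ∃ c : ℂ, c ≠ 0 ∧ ∀ x, x ≠ 0 → 0 < (c * ⟪x, T x⟫_ℂ).re := by
  obtain ⟨f, u, hu, hf⟩ := RCLike.geometric_hahn_banach_point_closed (𝕜 := ℂ)
    (convex_numericalRange T) (isCompact_numericalRange T).isClosed hT
  have hpos (x : E) (hx : x ≠ 0) : 0 < (f 1 * ⟪x, T x⟫_ℂ).re := by
    have hfx := hu.trans (hf _ (inner_div_norm_sq_mem_numericalRange T hx))
    rwa [map_zero, map_zero, ← mul_one (_ / _), ← smul_eq_mul, map_smul, smul_eq_mul,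
      div_mul_eq_mul_div, mul_comm, ← Complex.ofReal_pow, RCLike.re_to_complex,
      Complex.div_ofReal_re, div_pos_iff_of_pos_right (by positivity)] at hfx
  rcases subsingleton_or_nontrivial E with hE | hE
  · exact ⟨1, one_ne_zero, fun x hx ↦ absurd (Subsingleton.elim x 0) hx⟩
  · obtain ⟨x, hx⟩ := exists_ne (0 : E)
    exact ⟨f 1, fun h ↦ by simpa [h] using hpos x hx, hpos⟩

end NumericalRange

section PosDef

variable {𝕜 ι : Type*} [RCLike 𝕜] [Fintype ι] [DecidableEq ι]

open scoped MatrixOrder in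
lemma posDef_iff_exists_isUnit_eq_conjTranspose_mul_self {M : Matrix ι ι 𝕜} :
    M.PosDef ↔ ∃ S : Matrix ι ι 𝕜, IsUnit S ∧ M = Sᴴ * S := by
  rw [← isStrictlyPositive_iff_posDef, CStarAlgebra.isStrictlyPositive_iff_eq_star_mul_self]
  rfl

lemma conjTranspose_mul_inv_congr_mul {S : Matrix ι ι 𝕜} (hS : IsUnit S) (X : Matrix ι ι 𝕜) :
    Sᴴ * ((S⁻¹)ᴴ * X * S⁻¹) * S = X := by
  have hdet : IsUnit S.det := (isUnit_iff_isUnit_det S).1 hS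
  rw [conjTranspose_nonsing_inv, ← Matrix.mul_assoc, nonsing_inv_mul_cancel_right _ _ hdet,
    mul_nonsing_inv_cancel_left _ _ (by simpa [det_conjTranspose] using hdet)]

/-- A congruence taking `H` to `1` keeps `K` Hermitian; a unitary one then diagonalizes `K`. -/
lemma exists_simultaneous_diagonalization {H K : Matrix ι ι 𝕜} (hH : H.PosDef)
    (hK : K.IsHermitian) :
    ∃ (V : Matrix ι ι 𝕜) (l : ι → ℝ),
      IsUnit V ∧ H = Vᴴ * V ∧ K = Vᴴ * diagonal (fun i ↦ (l i : 𝕜)) * V := by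
  obtain ⟨S, hS, rfl⟩ := posDef_iff_exists_isUnit_eq_conjTranspose_mul_self.1 hH
  have hL : ((S⁻¹)ᴴ * K * S⁻¹).IsHermitian := isHermitian_conjTranspose_mul_mul _ hK
  obtain ⟨U, l, hspec⟩ : ∃ (U : unitaryGroup ι 𝕜) (l : ι → ℝ), (S⁻¹)ᴴ * K * S⁻¹ =
      (U : Matrix ι ι 𝕜) * diagonal (fun i ↦ (l i : 𝕜)) * star (U : Matrix ι ι 𝕜) :=
    ⟨hL.eigenvectorUnitary, hL.eigenvalues, hL.spectral_theorem⟩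
  have hV : (star (U : Matrix ι ι 𝕜) * S)ᴴ = Sᴴ * U := by
    rw [conjTranspose_mul, star_eq_conjTranspose, conjTranspose_conjTranspose]
  refine ⟨star (U : Matrix ι ι 𝕜) * S, l, (Unitary.toUnits (star U)).isUnit.mul hS, ?_, ?_⟩
  · rw [hV, Matrix.mul_assoc, ← Matrix.mul_assoc (U : Matrix ι ι 𝕜),
      Unitary.mul_star_self_of_mem U.2, Matrix.one_mul]
  · rw [hV, ← conjTranspose_mul_inv_congr_mul hS K, hspec]
    simp only [Matrix.mul_assoc]

lemma rank_conjTranspose_mul_mul_of_isUnit {T : Matrix ι ι 𝕜} (hT : IsUnit T)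
    (X : Matrix ι ι 𝕜) : (Tᴴ * X * T).rank = X.rank := by
  have hdet : IsUnit T.det := (isUnit_iff_isUnit_det T).1 hT
  rw [rank_mul_eq_left_of_isUnit_det _ _ hdet,
    rank_mul_eq_right_of_isUnit_det _ _ (by simpa [det_conjTranspose] using hdet)]

lemma rank_sub_conjTranspose_mul_self (A : Matrix ι ι 𝕜) {S : Matrix ι ι 𝕜} (hS : IsUnit S) :
    (A - Sᴴ * S).rank = ((S⁻¹)ᴴ * A * S⁻¹ - 1).rank := by
  rw [← rank_conjTranspose_mul_mul_of_isUnit hS ((S⁻¹)ᴴ * A * S⁻¹ - 1), Matrix.mul_sub,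
    Matrix.sub_mul, Matrix.mul_one, conjTranspose_mul_inv_congr_mul hS]

lemma setOf_rank_sub_posDef_eq (A : Matrix ι ι 𝕜) :
    {k | ∃ M : Matrix ι ι 𝕜, M.PosDef ∧ (A - M).rank = k} =
      {k | ∃ T : Matrix ι ι 𝕜, IsUnit T ∧ (Tᴴ * A * T - 1).rank = k} := by
  ext k
  constructor
  · rintro ⟨M, hM, rfl⟩
    obtain ⟨S, hS, rfl⟩ := posDef_iff_exists_isUnit_eq_conjTranspose_mul_self.1 hM
    exact ⟨S⁻¹, isUnit_nonsing_inv_iff.2 hS, (rank_sub_conjTranspose_mul_self A hS).symm⟩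
  · rintro ⟨T, hT, rfl⟩
    have hT' : IsUnit T⁻¹ := isUnit_nonsing_inv_iff.2 hT
    refine ⟨(T⁻¹)ᴴ * T⁻¹,
      posDef_iff_exists_isUnit_eq_conjTranspose_mul_self.2 ⟨T⁻¹, hT', rfl⟩, ?_⟩
    rw [rank_sub_conjTranspose_mul_self A hT',
      nonsing_inv_nonsing_inv T ((isUnit_iff_isUnit_det T).1 hT)]

end PosDef

section CanonicalPhases

open scoped ComplexStarModule InnerProductSpace

lemma isSectorial_iff_zero_notMem_numericalRange {A : Matrix (Fin n) (Fin n) ℂ} :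
    IsSectorial A ↔ 0 ∉ numericalRange (toEuclideanLin A) := by
  have hinner (x : EuclideanSpace ℂ (Fin n)) :
      ⟪x, toEuclideanLin A x⟫_ℂ = star x.ofLp ⬝ᵥ A *ᵥ x.ofLp := dotProduct_comm _ _
  have hnorm (x : EuclideanSpace ℂ (Fin n)) : ‖x‖ = 1 ↔ star x.ofLp ⬝ᵥ x.ofLp = 1 := by
    have hself : star x.ofLp ⬝ᵥ x.ofLp = ((‖x‖ ^ 2 : ℝ) : ℂ) := by
      rw [dotProduct_comm, ← EuclideanSpace.inner_eq_star_dotProduct, inner_self_eq_norm_sq_to_K]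
      norm_cast
    rw [hself, Complex.ofReal_eq_one, pow_eq_one_iff_of_nonneg (norm_nonneg x) two_ne_zero]
  simp only [IsSectorial, numericalRange, Set.mem_image, mem_sphere_zero_iff_norm, hnorm, hinner,
    not_exists, not_and]
  exact ⟨fun h x ↦ h x.ofLp, fun h x ↦ h (WithLp.toLp 2 x)⟩

lemma posDef_realPart_iff {ι : Type*} [Fintype ι] {A : Matrix ι ι ℂ} :
    (ℜ A : Matrix ι ι ℂ).PosDef ↔ ∀ x : ι → ℂ, x ≠ 0 → 0 < (star x ⬝ᵥ A *ᵥ x).re := by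
  have hquad (x : ι → ℂ) : star x ⬝ᵥ (ℜ A : Matrix ι ι ℂ) *ᵥ x = (star x ⬝ᵥ A *ᵥ x).re := by
    have hstar : star x ⬝ᵥ Aᴴ *ᵥ x = star (star x ⬝ᵥ A *ᵥ x) := by
      rw [star_dotProduct, star_mulVec, dotProduct_mulVec, conjTranspose_conjTranspose]
    rw [realPart_apply_coe, smul_mulVec, add_mulVec, dotProduct_smul, dotProduct_add,
      star_eq_conjTranspose, hstar, Complex.re_eq_add_conj, Complex.real_smul, Complex.star_def]
    push_cast
    ring
  have hherm : (ℜ A : Matrix ι ι ℂ).IsHermitian := (ℜ A).2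
  simp only [posDef_iff_dotProduct_mulVec, hherm, true_and, hquad, Complex.zero_lt_real]

lemma IsSectorial.exists_posDef_realPart_smul {A : Matrix (Fin n) (Fin n) ℂ}
    (hA : IsSectorial A) :
    ∃ c : ℂ, c ≠ 0 ∧ (ℜ (c • A) : Matrix (Fin n) (Fin n) ℂ).PosDef := by
  obtain ⟨c, hc, hpos⟩ :=
    exists_forall_re_mul_inner_pos (isSectorial_iff_zero_notMem_numericalRange.1 hA)
  refine ⟨c, hc, posDef_realPart_iff.2 fun x hx ↦ ?_⟩
  have := hpos (WithLp.toLp 2 x) (by simpa using hx)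
  simpa [smul_mulVec, EuclideanSpace.inner_eq_star_dotProduct, dotProduct_comm] using this

lemma exists_eq_conjTranspose_mul_diagonal_mul_of_posDef_realPart {ι : Type*} [Fintype ι]
    [DecidableEq ι] {A : Matrix ι ι ℂ} (hA : (ℜ A : Matrix ι ι ℂ).PosDef) :
    ∃ (V : Matrix ι ι ℂ) (l : ι → ℝ), IsUnit V ∧
      A = Vᴴ * diagonal (fun i ↦ 1 + Complex.I * (l i : ℂ)) * V := by
  obtain ⟨V, l, hV, hre, him⟩ := exists_simultaneous_diagonalization hA (ℑ A).2
  refine ⟨V, l, hV, ?_⟩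
  have hdiag : diagonal (fun i ↦ 1 + Complex.I * (l i : ℂ)) =
      (1 : Matrix ι ι ℂ) + Complex.I • diagonal (fun i ↦ (l i : ℂ)) := by
    rw [← diagonal_one, ← diagonal_smul, diagonal_add]
    rfl
  calc A = (ℜ A : Matrix ι ι ℂ) + Complex.I • (ℑ A : Matrix ι ι ℂ) :=
        (realPart_add_I_smul_imaginaryPart A).symm
    _ = Vᴴ * V + Complex.I • (Vᴴ * diagonal (fun i ↦ (l i : ℂ)) * V) :=
        congrArg₂ (fun X Y ↦ X + Complex.I • Y) hre him
    _ = Vᴴ * diagonal (fun i ↦ 1 + Complex.I * (l i : ℂ)) * V := by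
        rw [hdiag, Matrix.mul_add, Matrix.add_mul, Matrix.mul_one, Matrix.mul_smul,
          Matrix.smul_mul]

lemma exists_isSectorialDecomp_of_eq_conjTranspose_mul_diagonal_mul
    {A V : Matrix (Fin n) (Fin n) ℂ} {ρ φ : Fin n → ℝ} (hV : IsUnit V) (hρ : ∀ k, 0 < ρ k)
    (hA : A = Vᴴ * diagonal (fun k ↦ (ρ k : ℂ) * Complex.exp (Complex.I * φ k)) * V) :
    ∃ T, IsSectorialDecomp A T φ := by
  refine ⟨diagonal (fun k ↦ (√(ρ k) : ℂ)) * V, IsUnit.mul ?_ hV, ?_⟩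
  · rw [isUnit_diagonal, Pi.isUnit_iff]
    exact fun k ↦ by simpa using (Real.sqrt_pos.2 (hρ k)).ne'
  · have hd : diagonal (star fun k ↦ (√(ρ k) : ℂ)) * phaseDiag φ *
        diagonal (fun k ↦ (√(ρ k) : ℂ)) =
        diagonal (fun k ↦ (ρ k : ℂ) * Complex.exp (Complex.I * φ k)) := by
      rw [phaseDiag, diagonal_mul_diagonal, diagonal_mul_diagonal]
      refine congrArg diagonal (funext fun k ↦ ?_)
      rw [Pi.star_apply, Complex.star_def, Complex.conj_ofReal, mul_right_comm,
        ← Complex.ofReal_mul, Real.mul_self_sqrt (hρ k).le]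
    rw [hA, ← hd, conjTranspose_mul, diagonal_conjTranspose]
    simp only [Matrix.mul_assoc]

lemma IsSectorial.exists_isSectorialDecomp {A : Matrix (Fin n) (Fin n) ℂ} (hA : IsSectorial A) :
    ∃ T φ, IsSectorialDecomp A T φ ∧ ∀ i j, φ i - φ j < Real.pi := by
  obtain ⟨c, hc, hre⟩ := hA.exists_posDef_realPart_smul
  obtain ⟨V, l, hV, hcA⟩ := exists_eq_conjTranspose_mul_diagonal_mul_of_posDef_realPart hre
  set d : Fin n → ℂ := fun k ↦ 1 + Complex.I * (l k : ℂ) with hd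
  have hd_re (k : Fin n) : 0 < (d k).re := by simp [hd]
  have hd_arg (k : Fin n) : |(d k).arg| < Real.pi / 2 :=
    Complex.abs_arg_lt_pi_div_two_iff.2 (.inl (hd_re k))
  have hd_ne (k : Fin n) : d k ≠ 0 := fun h ↦ by simpa [h] using hd_re k
  set ρ : Fin n → ℝ := fun k ↦ ‖c⁻¹‖ * ‖d k‖ with hρ
  set φ : Fin n → ℝ := fun k ↦ c⁻¹.arg + (d k).arg with hφ
  have hρ_pos (k : Fin n) : 0 < ρ k := by simp [hρ, hc, hd_ne k]
  have hpolar (k : Fin n) : c⁻¹ * d k = ρ k * Complex.exp (Complex.I * φ k) := by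
    conv_lhs => rw [← Complex.norm_mul_exp_arg_mul_I c⁻¹, ← Complex.norm_mul_exp_arg_mul_I (d k)]
    rw [mul_mul_mul_comm, ← Complex.exp_add]
    simp only [hρ, hφ, Complex.ofReal_mul, Complex.ofReal_add]
    ring_nf
  have hAV : A = Vᴴ * diagonal (fun k ↦ (ρ k : ℂ) * Complex.exp (Complex.I * φ k)) * V := by
    rw [← inv_smul_smul₀ hc A, hcA, ← Matrix.smul_mul, ← Matrix.mul_smul, ← diagonal_smul]
    simp only [← hpolar]
    rfl
  obtain ⟨T, hT⟩ := exists_isSectorialDecomp_of_eq_conjTranspose_mul_diagonal_mul hV hρ_pos hAV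
  refine ⟨T, φ, hT, fun i j ↦ ?_⟩
  linarith [(abs_lt.1 (hd_arg i)).2, (abs_lt.1 (hd_arg j)).1]

namespace IsSectorialDecomp

variable {A T : Matrix (Fin n) (Fin n) ℂ} {φ : Fin n → ℝ}

lemma comp_perm (h : IsSectorialDecomp A T φ) (σ : Equiv.Perm (Fin n)) :
    IsSectorialDecomp A (T.submatrix σ id) (φ ∘ σ) := by
  obtain ⟨hT, rfl⟩ := h
  have hd : phaseDiag (φ ∘ σ) = (phaseDiag φ).submatrix σ σ :=
    (submatrix_diagonal_equiv (fun k ↦ Complex.exp (Complex.I * φ k)) σ).symm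
  refine ⟨(isUnit_submatrix_equiv (e₁ := σ) (e₂ := Equiv.refl _)).2 hT, ?_⟩
  rw [hd, conjTranspose_submatrix, submatrix_mul_equiv, submatrix_mul_equiv, submatrix_id_id]

lemma add_int_mul_two_pi (h : IsSectorialDecomp A T φ) (k : ℤ) :
    IsSectorialDecomp A T (fun i ↦ φ i + k * (2 * Real.pi)) := by
  have hd : phaseDiag (fun i ↦ φ i + k * (2 * Real.pi)) = phaseDiag φ := by
    refine congrArg diagonal (funext fun i ↦ ?_)
    rw [Complex.exp_eq_exp_iff_exists_int]
    exact ⟨k, by push_cast; ring⟩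
  exact ⟨h.1, hd ▸ h.2⟩

lemma exists_isCanonicalPhases_of_antitone (h : IsSectorialDecomp A T φ) (hφ : Antitone φ)
    (hlt : ∀ i j, φ i - φ j < Real.pi) : ∃ ψ, IsCanonicalPhases A ψ := by
  rcases isEmpty_or_nonempty (Fin n) with hn | hn
  · exact ⟨φ, hφ, hlt, by simp [Real.pi_pos], by simp [Real.pi_pos.le], T, h⟩
  obtain ⟨k, hk, -⟩ := existsUnique_add_zsmul_mem_Ioc Real.two_pi_pos
    (((⨆ i, φ i) + ⨅ i, φ i) / 2) (-Real.pi)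
  rw [zsmul_eq_mul] at hk
  have hsup : ⨆ i, (φ i + k * (2 * Real.pi)) = (⨆ i, φ i) + k * (2 * Real.pi) :=
    (ciSup_add (Set.finite_range φ).bddAbove _).symm
  have hinf : ⨅ i, (φ i + k * (2 * Real.pi)) = (⨅ i, φ i) + k * (2 * Real.pi) :=
    (ciInf_add (Set.finite_range φ).bddBelow _).symm
  refine ⟨fun i ↦ φ i + k * (2 * Real.pi), hφ.add_const _, fun i j ↦ ?_, ?_, ?_, T,
    h.add_int_mul_two_pi k⟩
  · simpa using hlt i j
  · rw [hsup, hinf]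
    linarith [hk.1]
  · rw [hsup, hinf]
    linarith [hk.2]

lemma rank_sub_le (h : IsSectorialDecomp A T φ) :
    (A - Tᴴ * T).rank ≤ {k | φ k ≠ 0}.ncard := by
  have hAT : A - Tᴴ * T = Tᴴ * (phaseDiag φ - 1) * T := by
    rw [Matrix.mul_sub, Matrix.sub_mul, Matrix.mul_one, ← h.2]
  rw [hAT, rank_conjTranspose_mul_mul_of_isUnit h.1, phaseDiag, ← diagonal_one, diagonal_sub,
    rank_diagonal, ← Nat.card_eq_fintype_card]
  refine Set.ncard_le_ncard (fun k hk h0 ↦ hk ?_) (Set.toFinite _)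
  simp [h0]

end IsSectorialDecomp

lemma IsSectorial.exists_isCanonicalPhases {A : Matrix (Fin n) (Fin n) ℂ} (hA : IsSectorial A) :
    ∃ φ, IsCanonicalPhases A φ := by
  obtain ⟨T, φ, h, hlt⟩ := hA.exists_isSectorialDecomp
  let σ := Tuple.sort (-φ)
  have hσ : Antitone (φ ∘ σ) := fun i j hij ↦ neg_le_neg_iff.1 (Tuple.monotone_sort (-φ) hij)
  exact (h.comp_perm σ).exists_isCanonicalPhases_of_antitone hσ fun i j ↦ hlt (σ i) (σ j)

lemma IsSectorial.isCanonicalPhases_phases {A : Matrix (Fin n) (Fin n) ℂ} (hA : IsSectorial A) :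
    IsCanonicalPhases A (phases A) := by
  have h := hA.exists_isCanonicalPhases
  rw [phases, dif_pos h]
  exact h.choose_spec

end CanonicalPhases

/-- `prank A ≥ min rank (A - M)` over `M ≻ 0`, and this min equals
`min rank (TᴴAT - I)` over invertible `T`. -/
theorem prank_ge_min_rank_sub_posDef
    (A : Matrix (Fin n) (Fin n) ℂ) (hA : IsSectorial A) :
    sInf {k : ℕ | ∃ M : Matrix (Fin n) (Fin n) ℂ, M.PosDef ∧ (A - M).rank = k} ≤ prank A ∧
    sInf {k : ℕ | ∃ M : Matrix (Fin n) (Fin n) ℂ, M.PosDef ∧ (A - M).rank = k} =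
      sInf {k : ℕ | ∃ T : Matrix (Fin n) (Fin n) ℂ, IsUnit T ∧ (Tᴴ * A * T - 1).rank = k} := by
  refine ⟨?_, congrArg sInf (setOf_rank_sub_posDef_eq A)⟩
  obtain ⟨-, -, -, -, T, hT⟩ := hA.isCanonicalPhases_phases
  have hM : (Tᴴ * T).PosDef :=
    posDef_iff_exists_isUnit_eq_conjTranspose_mul_self.2 ⟨T, hT.1, rfl⟩
  calc sInf {k : ℕ | ∃ M : Matrix (Fin n) (Fin n) ℂ, M.PosDef ∧ (A - M).rank = k}
      ≤ (A - Tᴴ * T).rank := Nat.sInf_le ⟨Tᴴ * T, hM, rfl⟩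
    _ ≤ prank A := hT.rank_sub_le

end LowPrank
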